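/- Fix κ > 0 and d ≥ 1. For v ∈ R^d let p(v) := Σ_{i=1}^d e^{κ v_i}, define b_{ij}(v) := p(v) − e^{κ v_i} if i = j and b_{ij}(v) := −e^{κ v_j} if i ≠ j, and define c_{ijk}(v) := b_{ik}(v)(p(v) − 2e^{κ v_j}) if i = j or j = k, c_{ijk}(v) := b_{ij}(v)(p(v) − 2e^{κ v_k}) if i = k ≠ j, and c_{ijk}(v) := 2 b_{ij}(v) b_{ik}(v) if i, j, k are pairwise distinct. Then for every v ∈ R^d, Σ_{1≤i,j,k≤d} e^{κ v_i} |c_{ijk}(v)| ≤ 6 · p(v)³. -/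

import Mathlib

/-!
Write `e i = exp (κ v i)`, so that `0 ≤ e i ≤ p` and hence `|p - 2 e i| ≤ p`. Then
`e i * |c i j k|` is at most `2 e i e j e k`, plus `p e · e ·` for each of the coincidences
`i = j`, `j = k`, `i = k`, plus `p² e i` when `i = j = k` (`exp_mul_abs_cCoef_le`).
Since `∑ e i = p`, these terms sum to `2 p³ + 3 p³ + p³ = 6 p³`.
-/

open Real

/-- `p(v) = Σ_i exp(κ v_i)`. -/
noncomputable def pExp (d : ℕ) (κ : ℝ) (v : Fin d → ℝ) : ℝ :=
  ∑ i, Real.exp (κ * v i)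

/-- `b_{ij}(v) = p(v) − e^{κ v_i}` if `i = j`, and `−e^{κ v_j}` otherwise. -/
noncomputable def bCoef (d : ℕ) (κ : ℝ) (v : Fin d → ℝ) (i j : Fin d) : ℝ :=
  if i = j then pExp d κ v - Real.exp (κ * v i) else -Real.exp (κ * v j)

/-- `c_{ijk}(v)`: the coefficients of the third derivative of the smooth-max function:
`c_{ijk} = b_{ik}(p − 2e^{κ v_j})` if `i = j` or `j = k`;
`c_{ijk} = b_{ij}(p − 2e^{κ v_k})` if `i = k ≠ j`;
`c_{ijk} = 2 b_{ij} b_{ik}` if `i, j, k` are pairwise distinct. -/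
noncomputable def cCoef (d : ℕ) (κ : ℝ) (v : Fin d → ℝ) (i j k : Fin d) : ℝ :=
  if i = j ∨ j = k then bCoef d κ v i k * (pExp d κ v - 2 * Real.exp (κ * v j))
  else if i = k then bCoef d κ v i j * (pExp d κ v - 2 * Real.exp (κ * v k))
  else 2 * bCoef d κ v i j * bCoef d κ v i k

theorem exp_le_pExp (d : ℕ) (κ : ℝ) (v : Fin d → ℝ) (i : Fin d) :
    Real.exp (κ * v i) ≤ pExp d κ v :=
  Finset.single_le_sum (f := fun i => Real.exp (κ * v i))
    (fun _ _ => (Real.exp_pos _).le) (Finset.mem_univ i)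

theorem abs_pExp_sub_le (d : ℕ) (κ : ℝ) (v : Fin d → ℝ) (i : Fin d) :
    |pExp d κ v - 2 * Real.exp (κ * v i)| ≤ pExp d κ v := by
  have h := exp_le_pExp d κ v i
  have h0 := Real.exp_pos (κ * v i)
  rw [abs_le]
  constructor <;> linarith

/-- Termwise bound, arranged so that the sum over `i, j, k` of each term on the right is a
multiple of `p³`. -/
theorem exp_mul_abs_cCoef_le (d : ℕ) (κ : ℝ) (v : Fin d → ℝ) (i j k : Fin d) :
    Real.exp (κ * v i) * |cCoef d κ v i j k| ≤
      (if i = j then if j = k then pExp d κ v ^ 2 * Real.exp (κ * v i) else 0 else 0)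
      + (if i = j then pExp d κ v * (Real.exp (κ * v i) * Real.exp (κ * v k)) else 0)
      + (if j = k then pExp d κ v * (Real.exp (κ * v i) * Real.exp (κ * v j)) else 0)
      + (if i = k then pExp d κ v * (Real.exp (κ * v i) * Real.exp (κ * v j)) else 0)
      + 2 * (Real.exp (κ * v i) * (Real.exp (κ * v j) * Real.exp (κ * v k))) := by
  have hi := Real.exp_pos (κ * v i)
  have hj := Real.exp_pos (κ * v j)
  have hk := Real.exp_pos (κ * v k)
  have hpi := exp_le_pExp d κ v i
  have hai := abs_pExp_sub_le d κ v i
  have haj := abs_pExp_sub_le d κ v j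
  unfold cCoef bCoef
  generalize pExp d κ v = p at *
  have hp : 0 < p := hi.trans_le hpi
  by_cases hij : i = j
  · subst hij
    generalize Real.exp (κ * v i) = a at *
    by_cases hik : i = k
    · subst hik
      simp only [true_or, if_true, abs_mul]
      rw [abs_of_nonneg (sub_nonneg.2 hpi)]
      have h1 : (p - a) * |p - 2 * a| ≤ p * p := by
        gcongr
        linarith
      have h2 := mul_le_mul_of_nonneg_left h1 hi.le
      have : 0 ≤ p * (a * a) := by positivity
      have : 0 ≤ a * (Real.exp (κ * v i) * Real.exp (κ * v i)) := by positivity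
      have : 0 ≤ a * (a * a) := by positivity
      nlinarith
    · simp only [hik, true_or, if_true, if_false, abs_mul, abs_neg, abs_of_pos hk]
      have h2 := mul_le_mul_of_nonneg_left hai (mul_pos hi hk).le
      have : 0 ≤ a * (a * Real.exp (κ * v k)) := by positivity
      linarith
  · by_cases hjk : j = k
    · subst hjk
      simp only [hij, or_true, if_true, if_false, abs_mul, abs_neg, abs_of_pos hj]
      have h2 := mul_le_mul_of_nonneg_left haj (mul_pos hi hj).le
      have : 0 ≤ Real.exp (κ * v i) * (Real.exp (κ * v j) * Real.exp (κ * v j)) := by positivity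
      linarith
    · by_cases hik : i = k
      · subst hik
        simp only [hij, hjk, or_self, if_true, if_false, abs_mul, abs_neg, abs_of_pos hj]
        have h2 := mul_le_mul_of_nonneg_left hai (mul_pos hi hj).le
        have : 0 ≤ Real.exp (κ * v i) * (Real.exp (κ * v j) * Real.exp (κ * v i)) := by positivity
        linarith
      · simp only [hij, hjk, hik, or_self, if_false, abs_mul, abs_neg, abs_of_pos hj,
          abs_of_pos hk, abs_two]
        linarith

/-- `Σ_{i,j,k} e^{κ v_i} |c_{ijk}(v)| ≤ 6 p(v)³`. -/
theorem stmt_12 (d : ℕ) (hd : 1 ≤ d) (κ : ℝ) (hκ : 0 < κ) (v : Fin d → ℝ) :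
    ∑ i, ∑ j, ∑ k, Real.exp (κ * v i) * |cCoef d κ v i j k| ≤
      6 * (pExp d κ v) ^ 3 := by
  refine (Finset.sum_le_sum fun i _ => Finset.sum_le_sum fun j _ => Finset.sum_le_sum fun k _ =>
    exp_mul_abs_cCoef_le d κ v i j k).trans_eq ?_
  have hs : ∑ i, Real.exp (κ * v i) = pExp d κ v := rfl
  have h1 : ∀ i j : Fin d, ∑ k, (if i = j then
      if j = k then pExp d κ v ^ 2 * Real.exp (κ * v i) else 0 else 0) =
      if i = j then pExp d κ v ^ 2 * Real.exp (κ * v i) else 0 := by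
    intro i j
    split_ifs <;> simp
  have h2 : ∀ i j : Fin d, ∑ k, (if i = j then
      pExp d κ v * (Real.exp (κ * v i) * Real.exp (κ * v k)) else 0) =
      if i = j then pExp d κ v * (Real.exp (κ * v i) * pExp d κ v) else 0 := by
    intro i j
    split_ifs <;> simp [← Finset.mul_sum, hs]
  simp only [Finset.sum_add_distrib, h1, h2, Finset.sum_ite_eq, Finset.mem_univ, if_true,
    ← Finset.mul_sum, ← Finset.sum_mul, hs]
  ring
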